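/- The elementary factorial Schur multiple zeta value ζ_{(2,1),1}((2,k₂,…,k_r;2),(2)) satisfies: ζ_{(2,1),1}((2,𝐤;2),(2)) = ζ_{(r,1)}(2,𝐤;2)·ζ(2) - 2·ζ_{skew}((2,𝐤;1,3)) - 2·ζ_{skew}((3,𝐤;1,2)) + 4·ζ_{(r,1,1)}(3,𝐤;1;2) + 2·ζ_{(r,1,1)}(2,𝐤;2;2), where ζ_{skew}((2,𝐤;1,3)) denotes the skew-hook Schur multiple zeta value Σ over m ≤ c, a < c, a ≤ b₂ ≤ ⋯ ≤ b_r of 1/(m¹ a² c³ ∏b_j^{k_j})-type series as specified by the skew diagram with the box (2,1) shifted left (i.e., Σ over positive integers m, a, c, b₂,…,b_r with a ≤ b₂ ≤ ⋯ ≤ b_r, a < c, m ≤ c of 1/(m a² (∏ b_j^{k_j}) c³)). -/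

import Mathlib

/-- Product `∏_j b_j^{-k_j}` over the row entries `b₂ ≤ ⋯ ≤ b_r`. -/
noncomputable def rowProd {n : ℕ} (k : Fin n → ℕ) (b : Fin n → ℕ) : ℝ :=
  (∏ j, ((b j : ℝ)) ^ (k j))⁻¹

/-- Hook `(r,1)` Schur MZV with exponents `(u, 𝐤 ; v)`. -/
noncomputable def hookR1 {n : ℕ} (k : Fin n → ℕ) (u v : ℕ) : ℝ :=
  ∑' x : {x : (ℕ × ℕ) × (Fin n → ℕ) //
      0 < x.1.1 ∧ x.1.1 < x.1.2 ∧ Monotone x.2 ∧ ∀ j, x.1.1 ≤ x.2 j},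
    ((x.1.1.1 : ℝ) ^ u * (x.1.1.2 : ℝ) ^ v)⁻¹ * rowProd k x.1.2

/-- Hook `(r,1,1)` Schur MZV with column exponents `(u,v,w)` and row exponents `𝐤`:
`Σ_{m₁ < m₂ < m₃, m₁ ≤ b₂ ≤ ⋯} m₁^{-u} m₂^{-v} m₃^{-w} ∏ b_j^{-k_j}`. -/
noncomputable def hookR11 {n : ℕ} (k : Fin n → ℕ) (u v w : ℕ) : ℝ :=
  ∑' x : {x : (ℕ × ℕ × ℕ) × (Fin n → ℕ) //
      0 < x.1.1 ∧ x.1.1 < x.1.2.1 ∧ x.1.2.1 < x.1.2.2 ∧ Monotone x.2 ∧ ∀ j, x.1.1 ≤ x.2 j},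
    ((x.1.1.1 : ℝ) ^ u * (x.1.1.2.1 : ℝ) ^ v * (x.1.1.2.2 : ℝ) ^ w)⁻¹ * rowProd k x.1.2

/-- Skew-hook value with exponents `(u,𝐤; t, w)`: sum over `m, a, c, b₂ ≤ ⋯ ≤ b_r` with
`a ≤ b_j`, `a < c`, `m ≤ c`, of `m^{-t} a^{-u} c^{-w} ∏ b_j^{-k_j}`. -/
noncomputable def skewHook {n : ℕ} (k : Fin n → ℕ) (u t w : ℕ) : ℝ :=
  ∑' x : {x : (ℕ × ℕ × ℕ) × (Fin n → ℕ) //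
      0 < x.1.1 ∧ 0 < x.1.2.1 ∧ x.1.2.1 < x.1.2.2 ∧ x.1.1 ≤ x.1.2.2
        ∧ Monotone x.2 ∧ ∀ j, x.1.2.1 ≤ x.2 j},
    ((x.1.1.1 : ℝ) ^ t * (x.1.1.2.1 : ℝ) ^ u * (x.1.1.2.2 : ℝ) ^ w)⁻¹ * rowProd k x.1.2

/-- `ζ_{(2,1),1}((2,𝐤;2),(2)) = Σ_{m ≥ 1, fillings} 1/(m²(m+a)²(m+c)² ∏ b^k)`. -/
noncomputable def efLHS {n : ℕ} (k : Fin n → ℕ) : ℝ :=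
  ∑' x : {x : (ℕ × ℕ × ℕ) × (Fin n → ℕ) //
      0 < x.1.1 ∧ 0 < x.1.2.1 ∧ x.1.2.1 < x.1.2.2 ∧ Monotone x.2 ∧ ∀ j, x.1.2.1 ≤ x.2 j},
    ((x.1.1.1 : ℝ) ^ 2 * ((x.1.1.1 + x.1.1.2.1 : ℕ) : ℝ) ^ 2
        * ((x.1.1.1 + x.1.1.2.2 : ℕ) : ℝ) ^ 2)⁻¹ * rowProd k x.1.2

open scoped ENNReal

/-- The extended nonnegative real `1 / n`, with the value `0` at `n = 0`. -/
noncomputable def recip (n : ℕ) : ℝ≥0∞ := ENNReal.ofReal ((n : ℝ)⁻¹)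

lemma recip_mul_recip {m c : ℕ} (hm : 0 < m) (hc : 0 < c) :
    recip m * recip (m + c) + recip c * recip (m + c) = recip m * recip c := by
  unfold recip
  rw [← ENNReal.ofReal_mul (by positivity), ← ENNReal.ofReal_mul (by positivity),
    ← ENNReal.ofReal_mul (by positivity), ← ENNReal.ofReal_add (by positivity) (by positivity)]
  congr 1
  have : (0 : ℝ) < m := by exact_mod_cast hm
  have : (0 : ℝ) < c := by exact_mod_cast hc
  push_cast
  field_simp
  ring

lemma sq_partial_fraction {R : Type*} [CommSemiring R] {x y z : R} (h : x * z + y * z = x * y) :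
    x ^ 2 * z ^ 2 + 2 * y ^ 2 * (x * z) = y ^ 2 * (x ^ 2 + z ^ 2) := by
  calc x ^ 2 * z ^ 2 + 2 * y ^ 2 * (x * z)
      = x ^ 2 * z ^ 2 + 2 * (y * z) * (x * y) := by ring
    _ = x ^ 2 * z ^ 2 + 2 * (y * z) * (x * z + y * z) := by rw [h]
    _ = (x * z + y * z) ^ 2 + y ^ 2 * z ^ 2 := by ring
    _ = (x * y) ^ 2 + y ^ 2 * z ^ 2 := by rw [h]
    _ = y ^ 2 * (x ^ 2 + z ^ 2) := by ring

lemma hasSum_inv_sub_inv_add (c : ℕ) :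
    HasSum (fun m : ℕ => ((m + 1 : ℕ) : ℝ)⁻¹ - ((m + 1 + c : ℕ) : ℝ)⁻¹)
      (∑ i ∈ Finset.range c, ((i + 1 : ℕ) : ℝ)⁻¹) := by
  induction c with
  | zero => simp
  | succ c ih =>
    rw [Finset.sum_range_succ]
    have step : HasSum (fun m : ℕ => ((m + 1 + c : ℕ) : ℝ)⁻¹ - ((m + 1 + (c + 1) : ℕ) : ℝ)⁻¹)
        ((c + 1 : ℕ) : ℝ)⁻¹ := by
      rw [hasSum_iff_tendsto_nat_of_nonneg]
      · have hs (N : ℕ) : ∑ m ∈ Finset.range N,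
            (((m + 1 + c : ℕ) : ℝ)⁻¹ - ((m + 1 + (c + 1) : ℕ) : ℝ)⁻¹)
              = ((c + 1 : ℕ) : ℝ)⁻¹ - ((N + (c + 1) : ℕ) : ℝ)⁻¹ := by
          induction N with
          | zero => simp
          | succ N ihN =>
            rw [Finset.sum_range_succ, ihN, show N + 1 + c = N + (c + 1) by ring]
            ring
        simp_rw [hs]
        have ht := (tendsto_inv_atTop_nhds_zero_nat (𝕜 := ℝ)).comp
          (Filter.tendsto_add_atTop_nat (c + 1))
        simpa [Function.comp_def] using ht.const_sub (((c + 1 : ℕ) : ℝ)⁻¹)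
      · intro m
        rw [sub_nonneg]
        gcongr
        omega
    refine (ih.add step).congr_fun ?_
    intro m
    ring

/-- The harmonic number `1 + 1/2 + ⋯ + 1/c`. -/
noncomputable def recipSum (c : ℕ) : ℝ≥0∞ := ∑ i ∈ Finset.range c, recip (i + 1)

lemma tsum_recip_mul_recip_add {c : ℕ} (hc : 0 < c) :
    ∑' m : ℕ, recip (m + 1) * recip (m + 1 + c) = recip c * recipSum c := by
  have h := (hasSum_inv_sub_inv_add c).mul_left ((c : ℝ)⁻¹)
  have hc' : (0 : ℝ) < c := by exact_mod_cast hc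
  have hterm (m : ℕ) : (c : ℝ)⁻¹ * (((m + 1 : ℕ) : ℝ)⁻¹ - ((m + 1 + c : ℕ) : ℝ)⁻¹)
      = ((m + 1 : ℕ) : ℝ)⁻¹ * ((m + 1 + c : ℕ) : ℝ)⁻¹ := by
    push_cast
    field_simp
    ring
  simp_rw [hterm] at h
  simp only [recip, recipSum]
  rw [← ENNReal.ofReal_sum_of_nonneg (fun i _ => by positivity),
    ← ENNReal.ofReal_mul (by positivity), ← h.tsum_eq,
    ENNReal.ofReal_tsum_of_nonneg (fun m => by positivity) h.summable]
  simp_rw [ENNReal.ofReal_mul (inv_nonneg.2 (Nat.cast_nonneg _))]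

/-- `∑_{c > a} ∑_{n > c} c^{-s} n^{-2}`. -/
noncomputable def tailDouble (a s : ℕ) : ℝ≥0∞ :=
  ∑' (d : ℕ) (m : ℕ), recip (a + d + 1) ^ s * recip (a + d + 1 + m + 1) ^ 2

/-- `∑_{c > a} H_c c^{-s}`, with `H_c` the harmonic number. -/
noncomputable def tailHarmonic (a s : ℕ) : ℝ≥0∞ :=
  ∑' d : ℕ, recip (a + d + 1) ^ s * recipSum (a + d + 1)

lemma tsum_recip_mul_sq_add (a : ℕ) :
    (∑' (d : ℕ) (m : ℕ), recip (m + 1) * recip (m + 1 + (a + d + 1)) ^ 2) + tailDouble a 1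
      = tailHarmonic a 2 := by
  unfold tailDouble tailHarmonic
  rw [← ENNReal.tsum_add]
  refine tsum_congr fun d => ?_
  rw [← ENNReal.tsum_add, pow_two, mul_assoc, ← tsum_recip_mul_recip_add (by omega),
    ← ENNReal.tsum_mul_left]
  refine tsum_congr fun m => ?_
  have h := recip_mul_recip (m := m + 1) (c := a + d + 1) (by omega) (by omega)
  rw [show a + d + 1 + m + 1 = m + 1 + (a + d + 1) by ring, pow_one, pow_two, ← mul_assoc,
    ← mul_assoc, ← add_mul, h]
  ring

lemma tsum_sq_mul_sq_add (a : ℕ) :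
    (∑' (d : ℕ) (m : ℕ), recip (m + 1) ^ 2 * recip (m + 1 + (a + d + 1)) ^ 2)
        + 2 * tailHarmonic a 3
      = (∑' d : ℕ, recip (a + d + 1) ^ 2) * (∑' m : ℕ, recip (m + 1) ^ 2) + tailDouble a 2 := by
  unfold tailDouble tailHarmonic
  rw [← ENNReal.tsum_mul_left, ← ENNReal.tsum_mul_right, ← ENNReal.tsum_add, ← ENNReal.tsum_add]
  refine tsum_congr fun d => ?_
  have e : (2 : ℝ≥0∞) * (recip (a + d + 1) ^ 3 * recipSum (a + d + 1))
      = ∑' m : ℕ, 2 * recip (a + d + 1) ^ 2 * (recip (m + 1) * recip (m + 1 + (a + d + 1))) := by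
    rw [ENNReal.tsum_mul_left, tsum_recip_mul_recip_add (by omega)]
    ring
  rw [e, ← ENNReal.tsum_mul_left, ← ENNReal.tsum_add, ← ENNReal.tsum_add]
  refine tsum_congr fun m => ?_
  rw [sq_partial_fraction (recip_mul_recip (by omega) (by omega)),
    show a + d + 1 + m + 1 = m + 1 + (a + d + 1) by ring, mul_add]

lemma tsum_shifted_eq_tailDouble (a s : ℕ) :
    ∑' (d : ℕ) (m : ℕ), recip (m + 1 + a) ^ s * recip (m + 1 + (a + d + 1)) ^ 2
      = tailDouble a s := by
  rw [ENNReal.tsum_comm, tailDouble]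
  refine tsum_congr fun m => tsum_congr fun d => ?_
  rw [show m + 1 + a = a + m + 1 by ring, show m + 1 + (a + d + 1) = a + m + 1 + d + 1 by ring]

/-- The identity for a fixed corner entry `a`. -/
lemma fixed_corner_identity {a : ℕ} (ha : 0 < a) :
    (∑' (d : ℕ) (m : ℕ),
        recip (m + 1) ^ 2 * recip (m + 1 + a) ^ 2 * recip (m + 1 + (a + d + 1)) ^ 2)
        + 2 * (recip a ^ 2 * tailHarmonic a 3) + 2 * (recip a ^ 3 * tailHarmonic a 2)
      = recip a ^ 2 * (∑' d : ℕ, recip (a + d + 1) ^ 2) * (∑' m : ℕ, recip (m + 1) ^ 2)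
        + 4 * (recip a ^ 3 * tailDouble a 1) + 2 * (recip a ^ 2 * tailDouble a 2) := by
  set L := ∑' (d : ℕ) (m : ℕ),
    recip (m + 1) ^ 2 * recip (m + 1 + a) ^ 2 * recip (m + 1 + (a + d + 1)) ^ 2
  set P := ∑' (d : ℕ) (m : ℕ), recip (m + 1) * recip (m + 1 + a) * recip (m + 1 + (a + d + 1)) ^ 2
  set B := ∑' (d : ℕ) (m : ℕ), recip (m + 1) ^ 2 * recip (m + 1 + (a + d + 1)) ^ 2
  set G := ∑' (d : ℕ) (m : ℕ), recip (m + 1) * recip (m + 1 + (a + d + 1)) ^ 2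
  have h1 : L + 2 * recip a ^ 2 * P = recip a ^ 2 * (B + tailDouble a 2) := by
    rw [← tsum_shifted_eq_tailDouble]
    simp only [L, P, B, ← ENNReal.tsum_mul_left, ← ENNReal.tsum_add]
    refine tsum_congr fun d => tsum_congr fun m => ?_
    rw [← mul_assoc, ← add_mul, sq_partial_fraction (recip_mul_recip (by omega) ha)]
    ring
  have h2 : P + recip a * tailDouble a 1 = recip a * G := by
    rw [← tsum_shifted_eq_tailDouble]
    simp only [P, G, ← ENNReal.tsum_mul_left, ← ENNReal.tsum_add]
    refine tsum_congr fun d => tsum_congr fun m => ?_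
    rw [pow_one, ← mul_assoc, ← add_mul, recip_mul_recip (by omega) ha]
    ring
  have h3 : G + tailDouble a 1 = tailHarmonic a 2 := tsum_recip_mul_sq_add a
  have h4 : B + 2 * tailHarmonic a 3 = _ := tsum_sq_mul_sq_add a
  set Q := recip a
  set S := tailHarmonic a 3
  set U := tailDouble a 1
  set V := tailDouble a 2
  calc L + 2 * (Q ^ 2 * S) + 2 * (Q ^ 3 * tailHarmonic a 2)
      = L + 2 * Q ^ 2 * (Q * G) + 2 * Q ^ 2 * S + 2 * Q ^ 3 * U := by rw [← h3]; ring
    _ = (L + 2 * Q ^ 2 * P) + 2 * Q ^ 2 * S + 4 * Q ^ 3 * U := by rw [← h2]; ring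
    _ = Q ^ 2 * (B + 2 * S) + Q ^ 2 * V + 4 * Q ^ 3 * U := by rw [h1]; ring
    _ = _ := by rw [h4]; ring

lemma rowProd_nonneg {n : ℕ} (k b : Fin n → ℕ) : 0 ≤ rowProd k b := by
  unfold rowProd
  positivity

open Classical in
/-- The total weight of the rows `b₂ ≤ ⋯ ≤ b_r` with all entries at least `a`. -/
noncomputable def rowSum {n : ℕ} (k : Fin n → ℕ) (a : ℕ) : ℝ≥0∞ :=
  ∑' b : Fin n → ℕ,
    if Monotone b ∧ ∀ j, a ≤ b j then ENNReal.ofReal (rowProd k b) else 0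

lemma tsum_fillings_eq_toReal {n : ℕ} (k : Fin n → ℕ) {X Y : Type*} {φ : Y → X}
    (hφ : Function.Injective φ) (a : X → ℕ) {F : X → ℝ} (hF : ∀ x, 0 ≤ F x)
    {p : X × (Fin n → ℕ) → Prop}
    (hp : ∀ x, p x ↔ x.1 ∈ Set.range φ ∧ Monotone x.2 ∧ ∀ j, a x.1 ≤ x.2 j) :
    ∑' x : {x // p x}, F x.1.1 * rowProd k x.1.2
      = (∑' y : Y, ENNReal.ofReal (F (φ y)) * rowSum k (a (φ y))).toReal := by
  classical
  have hreal (x : {x // p x}) : F x.1.1 * rowProd k x.1.2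
      = (ENNReal.ofReal (F x.1.1 * rowProd k x.1.2)).toReal :=
    (ENNReal.toReal_ofReal (mul_nonneg (hF _) (rowProd_nonneg _ _))).symm
  rw [tsum_congr hreal, ← ENNReal.tsum_toReal_eq (fun _ => ENNReal.ofReal_ne_top)]
  congr 1
  have hsub := tsum_subtype {x | p x}
    (fun x : X × (Fin n → ℕ) => ENNReal.ofReal (F x.1 * rowProd k x.2))
  refine hsub.trans ?_
  rw [ENNReal.tsum_prod', ← hφ.tsum_eq]
  · refine tsum_congr fun y => ?_
    rw [rowSum, ← ENNReal.tsum_mul_left]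
    refine tsum_congr fun b => ?_
    by_cases h : Monotone b ∧ ∀ j, a (φ y) ≤ b j
    · rw [Set.indicator_of_mem (show (φ y, b) ∈ {x | p x} from (hp _).2 ⟨⟨y, rfl⟩, h⟩), if_pos h,
        ENNReal.ofReal_mul (hF _)]
    · rw [Set.indicator_of_notMem (show (φ y, b) ∉ {x | p x} from fun hm => h ((hp _).1 hm).2),
        if_neg h, mul_zero]
  · intro x hx
    by_contra hr
    refine hx (ENNReal.tsum_eq_zero.2 fun b => ?_)
    exact Set.indicator_of_notMem (fun hm => hr ((hp _).1 hm).1) _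

lemma ofReal_inv_pow_mul_pow (a c u v : ℕ) :
    ENNReal.ofReal (((a : ℝ) ^ u * (c : ℝ) ^ v)⁻¹) = recip a ^ u * recip c ^ v := by
  rw [mul_inv, ENNReal.ofReal_mul (by positivity), ← inv_pow, ← inv_pow,
    ENNReal.ofReal_pow (by positivity), ENNReal.ofReal_pow (by positivity), recip, recip]

lemma ofReal_inv_pow_mul_pow_mul_pow (a b c u v w : ℕ) :
    ENNReal.ofReal (((a : ℝ) ^ u * (b : ℝ) ^ v * (c : ℝ) ^ w)⁻¹)
      = recip a ^ u * recip b ^ v * recip c ^ w := by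
  rw [mul_inv, ENNReal.ofReal_mul (by positivity), ofReal_inv_pow_mul_pow, ← inv_pow,
    ENNReal.ofReal_pow (by positivity), recip, recip, recip]

lemma tsum_inv_sq_eq_toReal :
    ∑' m : {m : ℕ // 0 < m}, (((m : ℕ) : ℝ) ^ 2)⁻¹ = (∑' m : ℕ, recip (m + 1) ^ 2).toReal := by
  rw [ENNReal.tsum_toReal_eq (fun m => by simp [recip])]
  refine (Equiv.tsum_eq Equiv.pnatEquivNat.symm _).symm.trans (tsum_congr fun m => ?_)
  rw [recip, ENNReal.toReal_pow, ENNReal.toReal_ofReal (by positivity), inv_pow]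
  rfl

lemma hookR1_eq_toReal {n : ℕ} (k : Fin n → ℕ) (u v : ℕ) :
    hookR1 k u v = (∑' a : ℕ, rowSum k (a + 1) *
      (recip (a + 1) ^ u * ∑' d : ℕ, recip (a + 1 + d + 1) ^ v)).toReal := by
  have h := tsum_fillings_eq_toReal k (X := ℕ × ℕ) (Y := ℕ × ℕ)
    (φ := fun y => (y.1 + 1, y.1 + 1 + y.2 + 1))
    (fun x y hxy => by simp only [Prod.mk.injEq] at hxy; ext <;> omega)
    (fun x => x.1) (F := fun x => ((x.1 : ℝ) ^ u * (x.2 : ℝ) ^ v)⁻¹) (fun x => by positivity)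
    (p := fun x => 0 < x.1.1 ∧ x.1.1 < x.1.2 ∧ Monotone x.2 ∧ ∀ j, x.1.1 ≤ x.2 j) (by
      rintro ⟨⟨a, c⟩, b⟩
      have : (a, c) ∈ Set.range (fun y : ℕ × ℕ => (y.1 + 1, y.1 + 1 + y.2 + 1))
          ↔ 0 < a ∧ a < c := by
        simp only [Set.mem_range, Prod.mk.injEq, Prod.exists]
        exact ⟨by omega, fun h => ⟨a - 1, c - a - 1, by omega⟩⟩
      rw [this, and_assoc])
  refine h.trans ?_
  congr 1
  rw [ENNReal.tsum_prod']
  refine tsum_congr fun a => ?_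
  rw [← ENNReal.tsum_mul_left, ← ENNReal.tsum_mul_left]
  refine tsum_congr fun d => ?_
  rw [ofReal_inv_pow_mul_pow, mul_comm]

lemma hookR11_eq_toReal {n : ℕ} (k : Fin n → ℕ) (u v : ℕ) :
    hookR11 k u v 2 = (∑' a : ℕ, rowSum k (a + 1) *
      (recip (a + 1) ^ u * tailDouble (a + 1) v)).toReal := by
  have h := tsum_fillings_eq_toReal k (X := ℕ × ℕ × ℕ) (Y := ℕ × ℕ × ℕ)
    (φ := fun y => (y.1 + 1, y.1 + 1 + y.2.1 + 1, y.1 + 1 + y.2.1 + 1 + y.2.2 + 1))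
    (fun x y hxy => by simp only [Prod.mk.injEq] at hxy; ext <;> omega)
    (fun x => x.1) (F := fun x => ((x.1 : ℝ) ^ u * (x.2.1 : ℝ) ^ v * (x.2.2 : ℝ) ^ 2)⁻¹)
    (fun x => by positivity)
    (p := fun x => 0 < x.1.1 ∧ x.1.1 < x.1.2.1 ∧ x.1.2.1 < x.1.2.2 ∧ Monotone x.2 ∧
      ∀ j, x.1.1 ≤ x.2 j) (by
      rintro ⟨⟨a, c, e⟩, b⟩
      have : (a, c, e) ∈ Set.range (fun y : ℕ × ℕ × ℕ =>
          (y.1 + 1, y.1 + 1 + y.2.1 + 1, y.1 + 1 + y.2.1 + 1 + y.2.2 + 1))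
          ↔ 0 < a ∧ a < c ∧ c < e := by
        simp only [Set.mem_range, Prod.mk.injEq, Prod.exists]
        exact ⟨by omega, fun h => ⟨a - 1, c - a - 1, e - c - 1, by omega⟩⟩
      rw [this, and_assoc, and_assoc])
  refine h.trans ?_
  congr 1
  rw [ENNReal.tsum_prod']
  refine tsum_congr fun a => ?_
  rw [ENNReal.tsum_prod', tailDouble]
  simp only [← ENNReal.tsum_mul_left]
  refine tsum_congr fun d => tsum_congr fun m => ?_
  rw [ofReal_inv_pow_mul_pow_mul_pow]
  ring

lemma efLHS_eq_toReal {n : ℕ} (k : Fin n → ℕ) :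
    efLHS k = (∑' a : ℕ, rowSum k (a + 1) * ∑' (d : ℕ) (m : ℕ),
      recip (m + 1) ^ 2 * recip (m + 1 + (a + 1)) ^ 2
        * recip (m + 1 + (a + 1 + d + 1)) ^ 2).toReal := by
  have h := tsum_fillings_eq_toReal k (X := ℕ × ℕ × ℕ) (Y := ℕ × ℕ × ℕ)
    (φ := fun y => (y.2.2 + 1, y.1 + 1, y.1 + 1 + y.2.1 + 1))
    (fun x y hxy => by simp only [Prod.mk.injEq] at hxy; ext <;> omega)
    (fun x => x.2.1) (F := fun x => ((x.1 : ℝ) ^ 2 * ((x.1 + x.2.1 : ℕ) : ℝ) ^ 2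
      * ((x.1 + x.2.2 : ℕ) : ℝ) ^ 2)⁻¹)
    (fun x => by positivity)
    (p := fun x => 0 < x.1.1 ∧ 0 < x.1.2.1 ∧ x.1.2.1 < x.1.2.2 ∧ Monotone x.2 ∧
      ∀ j, x.1.2.1 ≤ x.2 j) (by
      rintro ⟨⟨m, a, c⟩, b⟩
      have : (m, a, c) ∈ Set.range (fun y : ℕ × ℕ × ℕ =>
          (y.2.2 + 1, y.1 + 1, y.1 + 1 + y.2.1 + 1)) ↔ 0 < m ∧ 0 < a ∧ a < c := by
        simp only [Set.mem_range, Prod.mk.injEq, Prod.exists]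
        exact ⟨by omega, fun h => ⟨a - 1, c - a - 1, m - 1, by omega⟩⟩
      rw [this, and_assoc, and_assoc])
  refine h.trans ?_
  congr 1
  rw [ENNReal.tsum_prod']
  refine tsum_congr fun a => ?_
  rw [ENNReal.tsum_prod']
  simp only [← ENNReal.tsum_mul_left]
  refine tsum_congr fun d => tsum_congr fun m => ?_
  rw [ofReal_inv_pow_mul_pow_mul_pow, mul_comm]

lemma skewHook_eq_toReal {n : ℕ} (k : Fin n → ℕ) (u w : ℕ) :
    skewHook k u 1 w = (∑' a : ℕ, rowSum k (a + 1) *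
      (recip (a + 1) ^ u * tailHarmonic (a + 1) w)).toReal := by
  have h := tsum_fillings_eq_toReal k (X := ℕ × ℕ × ℕ)
    (Y := Σ y : ℕ × ℕ, Fin (y.1 + 1 + y.2 + 1))
    (φ := fun y => ((y.2 : ℕ) + 1, y.1.1 + 1, y.1.1 + 1 + y.1.2 + 1))
    (by
      rintro ⟨⟨a, d⟩, i⟩ ⟨⟨a', d'⟩, i'⟩ hxy
      simp only [Prod.mk.injEq] at hxy
      obtain rfl : a = a' := by omega
      obtain rfl : d = d' := by omega
      obtain rfl : i = i' := Fin.ext (by omega)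
      rfl)
    (fun x => x.2.1) (F := fun x => ((x.1 : ℝ) ^ 1 * (x.2.1 : ℝ) ^ u * (x.2.2 : ℝ) ^ w)⁻¹)
    (fun x => by positivity)
    (p := fun x => 0 < x.1.1 ∧ 0 < x.1.2.1 ∧ x.1.2.1 < x.1.2.2 ∧ x.1.1 ≤ x.1.2.2
        ∧ Monotone x.2 ∧ ∀ j, x.1.2.1 ≤ x.2 j) (by
      rintro ⟨⟨m, a, c⟩, b⟩
      have : (m, a, c) ∈ Set.range (fun y : (Σ y : ℕ × ℕ, Fin (y.1 + 1 + y.2 + 1)) =>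
          ((y.2 : ℕ) + 1, y.1.1 + 1, y.1.1 + 1 + y.1.2 + 1))
          ↔ 0 < m ∧ 0 < a ∧ a < c ∧ m ≤ c := by
        simp only [Set.mem_range, Prod.mk.injEq]
        constructor
        · rintro ⟨⟨⟨a', d⟩, i⟩, h⟩
          have := i.isLt
          dsimp only at *
          omega
        · intro h
          exact ⟨⟨(a - 1, c - a - 1), ⟨m - 1, by dsimp only; omega⟩⟩, by dsimp only; omega⟩
      rw [this, and_assoc, and_assoc, and_assoc])
  refine h.trans ?_
  congr 1
  rw [ENNReal.tsum_sigma', ENNReal.tsum_prod']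
  refine tsum_congr fun a => ?_
  rw [tailHarmonic]
  simp only [← ENNReal.tsum_mul_left]
  refine tsum_congr fun d => ?_
  rw [tsum_fintype, recipSum, ← Fin.sum_univ_eq_sum_range (fun i => recip (i + 1))]
  simp only [Finset.mul_sum]
  refine Finset.sum_congr rfl fun i _ => ?_
  rw [ofReal_inv_pow_mul_pow_mul_pow]
  ring

lemma tsum_pi_prod_eq_pow (f : ℕ → ℝ≥0∞) (n : ℕ) :
    ∑' b : Fin n → ℕ, ∏ j, f (b j) = (∑' m, f m) ^ n := by
  induction n with
  | zero => simp
  | succ n ih =>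
    rw [← (Fin.consEquiv (fun _ : Fin (n + 1) => ℕ)).tsum_eq, ENNReal.tsum_prod', pow_succ', ← ih,
      ← ENNReal.tsum_mul_right]
    refine tsum_congr fun m => ?_
    rw [← ENNReal.tsum_mul_left]
    refine tsum_congr fun b => ?_
    simp [Fin.consEquiv, Fin.prod_univ_succ]

lemma tsum_ofReal_rpow_ne_top {p : ℝ} (hp : p < -1) :
    ∑' m : ℕ, ENNReal.ofReal ((m : ℝ) ^ p) ≠ ∞ := by
  rw [← ENNReal.ofReal_tsum_of_nonneg (fun m => by positivity) (Real.summable_nat_rpow.2 hp)]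
  exact ENNReal.ofReal_ne_top

lemma rowProd_le_prod_rpow {n : ℕ} {k : Fin n → ℕ} (hk : ∀ j, 1 ≤ k j) {l : Fin n}
    (hl : ∀ j, j ≤ l) (hlast : 2 ≤ k l) {b : Fin n → ℕ} (hb : Monotone b) (hpos : ∀ j, 1 ≤ b j) :
    rowProd k b ≤ ∏ j, (b j : ℝ) ^ (-(1 + 1 / (n : ℝ))) := by
  have hb1 (j : Fin n) : (1 : ℝ) ≤ b j := by exact_mod_cast hpos j
  have hb0 (j : Fin n) : (0 : ℝ) ≤ b j := Nat.cast_nonneg _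
  have hP : 0 < ∏ j, (b j : ℝ) := Finset.prod_pos fun j _ => by linarith [hb1 j]
  have hn0 : (0 : ℝ) < n := by exact_mod_cast l.pos
  have hlow : (∏ j, (b j : ℝ)) * b l ≤ ∏ j, (b j : ℝ) ^ k j := by
    calc (∏ j, (b j : ℝ)) * b l = ∏ j, (b j : ℝ) * (if j = l then (b j : ℝ) else 1) := by
          rw [Finset.prod_mul_distrib]
          simp
      _ ≤ _ := by
          refine Finset.prod_le_prod (fun j _ => by split_ifs <;> positivity) fun j _ => ?_
          split_ifs with h
          · rw [← pow_two]
            exact pow_le_pow_right₀ (hb1 j) (h ▸ hlast)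
          · rw [mul_one]
            exact le_self_pow₀ (hb1 j) (by have := hk j; omega)
  have hmax : (∏ j, (b j : ℝ)) ^ (1 / (n : ℝ)) ≤ b l := by
    have : ∏ j, (b j : ℝ) ≤ (b l : ℝ) ^ (n : ℝ) := by
      rw [Real.rpow_natCast]
      calc ∏ j, (b j : ℝ) ≤ ∏ _j : Fin n, (b l : ℝ) := by
            refine Finset.prod_le_prod (fun j _ => hb0 j) fun j _ => ?_
            exact_mod_cast hb (hl j)
        _ = _ := by simp
    calc _ ≤ ((b l : ℝ) ^ (n : ℝ)) ^ (1 / (n : ℝ)) :=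
          Real.rpow_le_rpow hP.le this (by positivity)
      _ = b l := by
          rw [← Real.rpow_mul (hb0 l), mul_one_div_cancel hn0.ne', Real.rpow_one]
  rw [Real.finsetProd_rpow _ _ fun j _ => hb0 j, Real.rpow_neg hP.le, rowProd]
  refine inv_anti₀ (by positivity) (le_trans ?_ hlow)
  rw [Real.rpow_add hP, Real.rpow_one]
  gcongr

lemma rowSum_one_ne_top {n : ℕ} {k : Fin n → ℕ} (hk : ∀ j, 1 ≤ k j) {l : Fin n}
    (hl : ∀ j, j ≤ l) (hlast : 2 ≤ k l) : rowSum k 1 ≠ ∞ := by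
  have hn0 : (0 : ℝ) < n := by exact_mod_cast l.pos
  have hfin := ENNReal.pow_ne_top (n := n) (tsum_ofReal_rpow_ne_top
    (p := -(1 + 1 / (n : ℝ))) (by linarith [one_div_pos.2 hn0]))
  rw [← tsum_pi_prod_eq_pow] at hfin
  refine ne_top_of_le_ne_top hfin (ENNReal.tsum_le_tsum fun b => ?_)
  split_ifs with h
  · rw [← ENNReal.ofReal_prod_of_nonneg fun j _ => by positivity]
    exact ENNReal.ofReal_le_ofReal (rowProd_le_prod_rpow hk hl hlast h.1 h.2)
  · exact zero_le

lemma rowSum_anti {n : ℕ} (k : Fin n → ℕ) : Antitone (rowSum k) := by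
  intro a a' h
  refine ENNReal.tsum_le_tsum fun b => ?_
  split_ifs with h1 h2
  · exact le_rfl
  · exact absurd ⟨h1.1, fun j => h.trans (h1.2 j)⟩ h2
  · exact zero_le
  · exact le_rfl

lemma recip_anti {m c : ℕ} (hm : 0 < m) (h : m ≤ c) : recip c ≤ recip m := by
  unfold recip
  gcongr

lemma tsum_recip_sq_ne_top : ∑' m : ℕ, recip (m + 1) ^ 2 ≠ ∞ := by
  have h := tsum_ofReal_rpow_ne_top (p := -2) (by norm_num)
  refine ne_top_of_le_ne_top h ?_
  refine le_trans (le_of_eq (tsum_congr fun m => ?_))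
    (ENNReal.tsum_comp_le_tsum_of_injective (add_left_injective 1) _)
  rw [recip, ← ENNReal.ofReal_pow (by positivity), Real.rpow_neg (by positivity), inv_pow]
  norm_cast

lemma tsum_tail_sq_le (a : ℕ) :
    ∑' d : ℕ, recip (a + d + 1) ^ 2 ≤ ∑' m : ℕ, recip (m + 1) ^ 2 := by
  gcongr with d
  exact recip_anti (by omega) (by omega)

lemma tailDouble_one_le (a : ℕ) :
    tailDouble a 1 ≤ (∑' m : ℕ, ENNReal.ofReal ((m : ℝ) ^ (-(3 / 2) : ℝ))) ^ 2 := by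
  set g : ℕ → ℝ≥0∞ := fun m => ENNReal.ofReal ((m : ℝ) ^ (-(3 / 2) : ℝ)) with hg
  have hterm (c m : ℕ) (hc : 0 < c) (hm : 0 < m) :
      recip c ^ 1 * recip (c + m) ^ 2 ≤ g c * g m := by
    have hc' : (0 : ℝ) < c := by exact_mod_cast hc
    have hm' : (0 : ℝ) < m := by exact_mod_cast hm
    rw [recip, recip, hg, pow_one, ← ENNReal.ofReal_pow (by positivity),
      ← ENNReal.ofReal_mul (by positivity), ← ENNReal.ofReal_mul (by positivity)]
    refine ENNReal.ofReal_le_ofReal ?_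
    rw [Real.rpow_neg hc'.le, Real.rpow_neg hm'.le, ← mul_inv, inv_pow, ← mul_inv]
    refine inv_anti₀ (by positivity) ?_
    push_cast
    calc (c : ℝ) ^ (3 / 2 : ℝ) * (m : ℝ) ^ (3 / 2 : ℝ)
        = c * ((c : ℝ) ^ (1 / 2 : ℝ) * (m : ℝ) ^ (3 / 2 : ℝ)) := by
          rw [show (3 / 2 : ℝ) = 1 + 1 / 2 by norm_num, Real.rpow_add hc', Real.rpow_one, mul_assoc]
      _ ≤ c * (((c : ℝ) + m) ^ (1 / 2 : ℝ) * ((c : ℝ) + m) ^ (3 / 2 : ℝ)) := by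
          gcongr <;> linarith
      _ = c * ((c : ℝ) + m) ^ 2 := by
          rw [← Real.rpow_add (by positivity)]
          norm_num
  calc tailDouble a 1 ≤ ∑' (d : ℕ) (m : ℕ), g (a + d + 1) * g (m + 1) :=
        ENNReal.tsum_le_tsum fun d => ENNReal.tsum_le_tsum fun m => by
          have h := hterm (a + d + 1) (m + 1) (by omega) (by omega)
          rwa [← add_assoc] at h
    _ = (∑' d : ℕ, g (a + d + 1)) * ∑' m : ℕ, g (m + 1) := by
        simp_rw [ENNReal.tsum_mul_left, ENNReal.tsum_mul_right]
    _ ≤ (∑' m, g m) ^ 2 := by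
        rw [pow_two]
        exact mul_le_mul' (ENNReal.tsum_comp_le_tsum_of_injective
          (f := fun d => a + d + 1) (fun x y h => by dsimp only at h; omega) g)
          (ENNReal.tsum_comp_le_tsum_of_injective (add_left_injective 1) g)

lemma tailDouble_two_le (a : ℕ) : tailDouble a 2 ≤ tailDouble a 1 := by
  unfold tailDouble
  gcongr 1 with d
  gcongr 1 with m
  gcongr 1
  refine pow_le_pow_right_of_le_one' ?_ one_le_two
  exact (recip_anti one_pos (by omega)).trans (by simp [recip])

/-- Summability over the corner entry of a uniformly bounded inner sum. -/
lemma tsum_rowSum_mul_ne_top {n : ℕ} {k : Fin n → ℕ} (hfin : rowSum k 1 ≠ ∞) {u : ℕ} (hu : 2 ≤ u)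
    {f : ℕ → ℝ≥0∞} {C : ℝ≥0∞} (hC : C ≠ ∞) (hf : ∀ a, f a ≤ C) :
    ∑' a : ℕ, rowSum k (a + 1) * (recip (a + 1) ^ u * f (a + 1)) ≠ ∞ := by
  have hle : ∑' a : ℕ, rowSum k (a + 1) * (recip (a + 1) ^ u * f (a + 1))
      ≤ ∑' a : ℕ, rowSum k 1 * (recip (a + 1) ^ 2 * C) := by
    refine ENNReal.tsum_le_tsum fun a => ?_
    refine mul_le_mul' (rowSum_anti k (by omega)) (mul_le_mul' ?_ (hf _))
    exact pow_le_pow_right_of_le_one' ((recip_anti one_pos (by omega)).trans (by simp [recip])) hu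
  refine ne_top_of_le_ne_top ?_ hle
  rw [ENNReal.tsum_mul_left, ENNReal.tsum_mul_right]
  exact ENNReal.mul_ne_top hfin (ENNReal.mul_ne_top tsum_recip_sq_ne_top hC)

/-- The elementary factorial value `ζ_{(2,1),1}((2,𝐤;2),(2))` satisfies
`ζ_{(2,1),1}((2,𝐤;2),(2)) = ζ_{(r,1)}(2,𝐤;2)·ζ(2) − 2ζ_skew((2,𝐤;1,3)) − 2ζ_skew((3,𝐤;1,2))`
`+ 4ζ_{(r,1,1)}(3,𝐤;1;2) + 2ζ_{(r,1,1)}(2,𝐤;2;2)`. -/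
theorem efval_hook_decomposition (n : ℕ) (hn : 1 ≤ n) (k : Fin n → ℕ)
    (hk : ∀ j, 1 ≤ k j) (hlast : 2 ≤ k ⟨n - 1, by omega⟩) :
    efLHS k =
      hookR1 k 2 2 * (∑' m : {m : ℕ // 0 < m}, (((m : ℕ) : ℝ) ^ 2)⁻¹)
        - 2 * skewHook k 2 1 3 - 2 * skewHook k 3 1 2
        + 4 * hookR11 k 3 1 2 + 2 * hookR11 k 2 2 2 := by
  have hfin := rowSum_one_ne_top hk (fun j => Fin.le_def.2 (Nat.le_sub_one_of_lt j.isLt)) hlast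
  have hg := ENNReal.pow_ne_top (n := 2)
    (tsum_ofReal_rpow_ne_top (p := (-(3 / 2) : ℝ)) (by norm_num))
  have hA := tsum_rowSum_mul_ne_top hfin le_rfl tsum_recip_sq_ne_top tsum_tail_sq_le
  have hU := tsum_rowSum_mul_ne_top hfin (u := 3) (by omega) hg tailDouble_one_le
  have hV := tsum_rowSum_mul_ne_top hfin le_rfl hg
    fun a => (tailDouble_two_le a).trans (tailDouble_one_le a)
  have key := tsum_congr (L := .unconditional ℕ) fun a : ℕ =>
    congrArg (rowSum k (a + 1) * ·) (fixed_corner_identity (Nat.succ_pos a))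
  simp only [Nat.succ_eq_add_one, mul_add, mul_left_comm (rowSum k _) (2 : ℝ≥0∞),
    mul_left_comm (rowSum k _) (4 : ℝ≥0∞), ENNReal.tsum_add, ENNReal.tsum_mul_left] at key
  simp only [← mul_assoc (rowSum k _) _ (∑' m : ℕ, recip (m + 1) ^ 2),
    ENNReal.tsum_mul_right] at key
  rw [efLHS_eq_toReal, hookR1_eq_toReal, tsum_inv_sq_eq_toReal, skewHook_eq_toReal,
    skewHook_eq_toReal, hookR11_eq_toReal, hookR11_eq_toReal]
  have hζ := tsum_recip_sq_ne_top
  generalize (∑' m : ℕ, recip (m + 1) ^ 2) = Z at *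
  generalize (∑' a : ℕ, rowSum k (a + 1) * ∑' (d : ℕ) (m : ℕ),
      recip (m + 1) ^ 2 * recip (m + 1 + (a + 1)) ^ 2
        * recip (m + 1 + (a + 1 + d + 1)) ^ 2) = L at *
  generalize (∑' a : ℕ, rowSum k (a + 1) * (recip (a + 1) ^ 2 * tailHarmonic (a + 1) 3)) = S at *
  generalize (∑' a : ℕ, rowSum k (a + 1) * (recip (a + 1) ^ 3 * tailHarmonic (a + 1) 2)) = T at *
  generalize (∑' a : ℕ, rowSum k (a + 1) * (recip (a + 1) ^ 3 * tailDouble (a + 1) 1)) = U at *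
  generalize (∑' a : ℕ, rowSum k (a + 1) * (recip (a + 1) ^ 2 * tailDouble (a + 1) 2)) = V at *
  generalize (∑' a : ℕ, rowSum k (a + 1) *
    (recip (a + 1) ^ 2 * ∑' d : ℕ, recip (a + 1 + d + 1) ^ 2)) = A at *
  have hright : A * Z + 4 * U + 2 * V ≠ ∞ := by finiteness
  have hleft := hright
  rw [← key] at hleft
  simp only [ENNReal.add_ne_top] at hleft
  obtain ⟨⟨hL, hS⟩, hT⟩ := hleft
  have hreal := congrArg ENNReal.toReal key
  rw [ENNReal.toReal_add (by finiteness) hT, ENNReal.toReal_add hL hS,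
    ENNReal.toReal_add (by finiteness) (by finiteness),
    ENNReal.toReal_add (by finiteness) (by finiteness)] at hreal
  simp only [ENNReal.toReal_mul, ENNReal.toReal_ofNat] at hreal
  linarith
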